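/- arXiv:1809.07750 — 2 statements merged into one kernel-verified Lean document; each statement's English description precedes it below -/
import Mathlib

section
/- For an ε-differentially private mechanism run k times (each invocation (ε,0)-DP), advanced composition yields, for any δ' > 0, an overall guarantee of (ε', kδ + δ')-differential privacy where ε' = ε·√(2k·ln(1/δ')) + k·ε·(e^ε − 1). -/
open MeasureTheory Real Classical

/-- Two databases are neighbors if they differ in exactly one entry. -/
def Neighbor {D : Type*} {n : ℕ} (x y : Fin n → D) : Prop :=
  (Finset.univ.filter (fun i => x i ≠ y i)).card = 1

/-- A randomized mechanism `K` is `(ε, δ)`-differentially private. -/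
def DiffPriv {D : Type*} {n : ℕ} {R : Type*} [MeasurableSpace R]
    (K : (Fin n → D) → Measure R) (ε δ : ℝ) : Prop :=
  ∀ x y : Fin n → D, Neighbor x y → ∀ S : Set R, MeasurableSet S →
    K x S ≤ ENNReal.ofReal (Real.exp ε) * K y S + ENNReal.ofReal δ


/-
If `P` and `Q` are `(ε, δ)`-close, then `P ⊓ e^ε Q` and `Q ⊓ e^ε P` have mass at least `1 - δ` and
each is at most `e^ε` times the other. Interpolating the heavier one down to the mass of the lighter
one and normalising, `P` and `Q` contain equal multiples, of mass at least `1 - δ`, of two purely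
`ε`-indistinguishable probability measures. Products of these common parts have mass at least
`1 - ∑ δᵢ`, so it remains to treat the pure case.

There the privacy loss, i.e. the log-likelihood ratio of the product measures, is a sum of
independent terms with values in `[-εᵢ, εᵢ]` and means at most `εᵢ (e^εᵢ - 1)`. Hoeffding's
inequality bounds the probability `δ'` that it exceeds its mean by `√(2 (∑ εᵢ²) log (1/δ'))`, and
off that event the likelihood ratio is at most the exponential of the claimed budget.
-/

open ProbabilityTheory Set
open scoped ENNReal NNReal

section Measure

variable {Ω : Type*} [MeasurableSpace Ω] {μ ν : Measure Ω}

lemma inv_smul_measure_le_iff {c : ℝ≥0∞} (h0 : c ≠ 0) (htop : c ≠ ∞) :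
    c⁻¹ • μ ≤ ν ↔ μ ≤ c • ν := by
  simp only [Measure.le_iff', Measure.smul_apply, smul_eq_mul, ENNReal.inv_mul_le_iff h0 htop]

lemma measure_univ_le_inf_add [IsFiniteMeasure μ] [IsFiniteMeasure ν] {d : ℝ≥0∞}
    (h : ∀ s, MeasurableSet s → μ s ≤ ν s + d) : μ univ ≤ (μ ⊓ ν) univ + d := by
  obtain ⟨s, hs⟩ := exists_isHahnDecomposition μ ν
  have hsm := hs.measurableSet
  have hinf : μ.restrict s + ν.restrict sᶜ ≤ μ ⊓ ν := by
    refine le_inf ?_ ?_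
    · exact (add_le_add_right hs.ge_on_compl _).trans_eq (Measure.restrict_add_restrict_compl hsm)
    · exact (add_le_add_left hs.le_on _).trans_eq (Measure.restrict_add_restrict_compl hsm)
  calc μ univ = μ s + μ sᶜ := (measure_add_measure_compl hsm).symm
    _ ≤ μ s + (ν sᶜ + d) := by gcongr; exact h _ hsm.compl
    _ = (μ.restrict s + ν.restrict sᶜ) univ + d := by simp [add_assoc]
    _ ≤ (μ ⊓ ν) univ + d := by gcongr

lemma exists_measure_univ_eq_of_le [IsFiniteMeasure ν] (h : μ ≤ ν) {m : ℝ≥0∞}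
    (hμ : μ univ ≤ m) (hν : m ≤ ν univ) : ∃ τ, μ ≤ τ ∧ τ ≤ ν ∧ τ univ = m := by
  have : IsFiniteMeasure μ := isFiniteMeasure_of_le ν h
  set t : ℝ≥0∞ := (m - μ univ) / (ν univ - μ univ)
  have hgap : m - μ univ ≤ ν univ - μ univ := tsub_le_tsub_right hν _
  have ht : t ≤ 1 := ENNReal.div_le_of_le_mul (by simpa using hgap)
  refine ⟨t • (ν - μ) + μ, Measure.le_add_left le_rfl, ?_, ?_⟩
  · calc t • (ν - μ) + μ ≤ (1 : ℝ≥0∞) • (ν - μ) + μ := by gcongr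
      _ = ν := by rw [one_smul, Measure.sub_add_cancel_of_le h]
  · have hscale : t * (ν univ - μ univ) = m - μ univ :=
      ENNReal.div_mul_cancel' (fun h0 ↦ le_zero_iff.1 (h0 ▸ hgap))
        fun htop ↦ absurd htop (ENNReal.sub_ne_top (measure_ne_top ν _))
    rw [Measure.add_apply, Measure.smul_apply, Measure.sub_apply .univ h, smul_eq_mul, hscale,
      tsub_add_cancel_of_le hμ]

lemma measure_le_exp_mul_add_measure_llr [SigmaFinite μ] [SigmaFinite ν] (h : μ ≪ ν) (c : ℝ)
    {s : Set Ω} (hs : MeasurableSet s) :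
    μ s ≤ ENNReal.ofReal (exp c) * ν s + μ {x | c < llr μ ν x} := by
  set t := {x | c < llr μ ν x}
  have ht : MeasurableSet t := measurableSet_lt measurable_const (measurable_llr μ ν)
  have hdens : ∀ᵐ x ∂ν, x ∈ s \ t → μ.rnDeriv ν x ≤ ENNReal.ofReal (exp c) := by
    filter_upwards [exp_llr μ ν, Measure.rnDeriv_lt_top μ ν] with x hx htop hxt
    split_ifs at hx with h0
    · simp [h0]
    · rw [← ENNReal.ofReal_toReal htop.ne, ← hx]
      gcongr
      exact not_lt.1 hxt.2
  have hdiff : μ (s \ t) ≤ ENNReal.ofReal (exp c) * ν s := by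
    rw [← Measure.setLIntegral_rnDeriv' h (hs.diff ht)]
    refine (setLIntegral_mono_ae' (hs.diff ht) hdens).trans ?_
    rw [setLIntegral_const]
    gcongr
    exact sdiff_subset
  calc μ s ≤ μ (s \ t) + μ t := (measure_mono (subset_sdiff_union s t)).trans (measure_union_le _ _)
    _ ≤ _ := by gcongr

end Measure

section Pi

lemma prod_indicator_eq_indicator_univ_pi {ι : Type*} [Fintype ι] {Ω : ι → Type*}
    (s : ∀ i, Set (Ω i)) (f : ∀ i, Ω i → ℝ≥0∞) (x : ∀ i, Ω i) :
    ∏ i, (s i).indicator (f i) (x i) = (univ.pi s).indicator (fun x ↦ ∏ i, f i (x i)) x := by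
  by_cases hx : x ∈ univ.pi s
  · rw [indicator_of_mem hx]
    exact Finset.prod_congr rfl fun i _ ↦ indicator_of_mem (hx i trivial) _
  · obtain ⟨i, hi⟩ : ∃ i, x i ∉ s i := by simpa using hx
    rw [indicator_of_notMem hx]
    exact Finset.prod_eq_zero (Finset.mem_univ i) (indicator_of_notMem hi _)

variable {ι : Type*} [Fintype ι] {Ω : ι → Type*} [∀ i, MeasurableSpace (Ω i)]
  {μ ν : ∀ i, Measure (Ω i)}

lemma measure_pi_mono [∀ i, SigmaFinite (μ i)] (h : ∀ i, μ i ≤ ν i) :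
    Measure.pi μ ≤ Measure.pi ν := by
  have hout : (Measure.pi μ).toOuterMeasure ≤ OuterMeasure.pi fun i ↦ (ν i).toOuterMeasure :=
    OuterMeasure.le_pi.2 fun s _ ↦
      (Measure.pi_pi μ s).trans_le (Finset.prod_le_prod' fun i _ ↦ h i _)
  rw [Measure.pi_def ν]
  exact Measure.le_iff.2 fun s hs ↦ (hout s).trans_eq (toMeasure_apply _ _ hs).symm

lemma measure_pi_smul (c : ι → ℝ≥0) (μ : ∀ i, Measure (Ω i)) [∀ i, SigmaFinite (μ i)] :
    Measure.pi (fun i ↦ c i • μ i) = (∏ i, c i) • Measure.pi μ :=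
  Measure.pi_eq fun s _ ↦ by
    simp only [Measure.coe_nnreal_smul_apply, Measure.pi_pi, ENNReal.ofNNReal_finsetProd,
      Finset.prod_mul_distrib]

lemma prod_smul_measure_pi_le [∀ i, SigmaFinite (μ i)] {c : ι → ℝ≥0}
    (h : ∀ i, c i • μ i ≤ ν i) : (∏ i, c i) • Measure.pi μ ≤ Measure.pi ν :=
  (measure_pi_smul c μ).symm.trans_le (measure_pi_mono h)

lemma lintegral_pi_prod_eq_prod_lintegral [∀ i, IsProbabilityMeasure (μ i)] {f : ∀ i, Ω i → ℝ≥0∞}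
    (hf : ∀ i, Measurable (f i)) :
    ∫⁻ x, ∏ i, f i (x i) ∂Measure.pi μ = ∏ i, ∫⁻ x, f i x ∂μ i := by
  rw [lintegral_prod_eq_prod_lintegral_of_indepFun Finset.univ (fun i (x : ∀ i, Ω i) ↦ f i (x i))
    (iIndepFun_pi (X := f) fun i ↦ (hf i).aemeasurable) fun i ↦ (hf i).comp (measurable_pi_apply i)]
  exact Finset.prod_congr rfl fun i _ ↦ (measurePreserving_eval μ i).lintegral_comp (hf i)

lemma measure_pi_withDensity [∀ i, IsProbabilityMeasure (ν i)] {f : ∀ i, Ω i → ℝ≥0∞}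
    (hf : ∀ i, Measurable (f i)) [∀ i, SigmaFinite ((ν i).withDensity (f i))] :
    Measure.pi (fun i ↦ (ν i).withDensity (f i)) =
      (Measure.pi ν).withDensity fun x ↦ ∏ i, f i (x i) :=
  Measure.pi_eq fun s hs ↦ by
    have hpi := MeasurableSet.univ_pi hs
    simp_rw [withDensity_apply _ hpi, ← lintegral_indicator hpi,
      ← prod_indicator_eq_indicator_univ_pi, withDensity_apply _ (hs _),
      ← lintegral_indicator (hs _)]
    exact lintegral_pi_prod_eq_prod_lintegral fun i ↦ (hf i).indicator (hs i)

variable [∀ i, IsProbabilityMeasure (μ i)] [∀ i, IsProbabilityMeasure (ν i)]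

lemma measure_pi_eq_withDensity_prod_rnDeriv (h : ∀ i, μ i ≪ ν i) :
    Measure.pi μ = (Measure.pi ν).withDensity fun x ↦ ∏ i, (μ i).rnDeriv (ν i) (x i) := by
  rw [← measure_pi_withDensity fun i ↦ Measure.measurable_rnDeriv _ _]
  simp_rw [Measure.withDensity_rnDeriv_eq _ _ (h _)]

lemma absolutelyContinuous_pi (h : ∀ i, μ i ≪ ν i) : Measure.pi μ ≪ Measure.pi ν := by
  rw [measure_pi_eq_withDensity_prod_rnDeriv h]
  exact withDensity_absolutelyContinuous _ _

lemma llr_pi (h : ∀ i, μ i ≪ ν i) :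
    llr (Measure.pi μ) (Measure.pi ν) =ᵐ[Measure.pi μ] fun x ↦ ∑ i, llr (μ i) (ν i) (x i) := by
  have hprod : (Measure.pi μ).rnDeriv (Measure.pi ν) =ᵐ[Measure.pi μ]
      fun x ↦ ∏ i, (μ i).rnDeriv (ν i) (x i) := by
    refine (absolutelyContinuous_pi h).ae_eq ?_
    nth_rw 1 [measure_pi_eq_withDensity_prod_rnDeriv h]
    exact Measure.rnDeriv_withDensity _ (by fun_prop)
  have hpos : ∀ i, ∀ᵐ y ∂μ i, ((μ i).rnDeriv (ν i) y).toReal ≠ 0 := fun i ↦ by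
    filter_upwards [Measure.rnDeriv_pos (h i),
      (h i).ae_le (Measure.rnDeriv_lt_top (μ i) (ν i))] with y h0 htop
    exact (ENNReal.toReal_pos h0.ne' htop.ne).ne'
  have hpos_pi : ∀ᵐ x ∂Measure.pi μ, ∀ i, ((μ i).rnDeriv (ν i) (x i)).toReal ≠ 0 :=
    Filter.eventually_all.2 fun i ↦ Measure.tendsto_eval_ae_ae.eventually (hpos i)
  filter_upwards [hprod, hpos_pi] with x hx hx0
  simp only [llr_def]
  rw [hx, ENNReal.toReal_prod, Real.log_prod fun i _ ↦ hx0 i]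

end Pi

section Concentration

lemma measureReal_sqrt_lt_le {Ω : Type*} [MeasurableSpace Ω] {μ : Measure Ω} [IsFiniteMeasure μ]
    {X : Ω → ℝ} {c : ℝ≥0} (hX : HasSubgaussianMGF X c μ) {δ : ℝ} (hδ : 0 < δ) :
    μ.real {ω | √(2 * c * log (1 / δ)) < X ω} ≤ δ := by
  rcases eq_or_ne c 0 with rfl | hc
  · have hnull : μ {ω | 0 < X ω} = 0 :=
      measure_mono_null (fun _ h ↦ ne_of_gt h) hX.ae_eq_zero_of_hasSubgaussianMGF_zero
    simpa [measureReal_def, hnull] using hδ.le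
  · have hsq : 2 * c * log (1 / δ) ≤ √(2 * c * log (1 / δ)) ^ 2 :=
      Real.sq_sqrt'.symm ▸ le_max_left _ _
    calc μ.real {ω | √(2 * c * log (1 / δ)) < X ω}
        ≤ μ.real {ω | √(2 * c * log (1 / δ)) ≤ X ω} := measureReal_mono fun ω (h : _ < X ω) ↦ h.le
      _ ≤ exp (-√(2 * c * log (1 / δ)) ^ 2 / (2 * c)) := hX.measure_ge_le (sqrt_nonneg _)
      _ ≤ exp (-(2 * c * log (1 / δ)) / (2 * c)) := by gcongr
      _ = exp (log δ) := by rw [one_div, log_inv]; field_simp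
      _ = δ := exp_log hδ

lemma measure_pi_sum_gt_le {ι : Type*} [Fintype ι] {Ω : ι → Type*} [∀ i, MeasurableSpace (Ω i)]
    {μ : ∀ i, Measure (Ω i)} [∀ i, IsProbabilityMeasure (μ i)] {X : ∀ i, Ω i → ℝ} {a b : ι → ℝ}
    (hX : ∀ i, Measurable (X i)) (hab : ∀ i, ∀ᵐ y ∂μ i, X i y ∈ Icc (a i) (b i))
    {δ : ℝ} (hδ : 0 < δ) :
    Measure.pi μ {x | √(2 * (∑ i, ((b i - a i) / 2) ^ 2) * log (1 / δ)) + ∑ i, ∫ y, X i y ∂μ i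
      < ∑ i, X i (x i)} ≤ ENNReal.ofReal δ := by
  have hindep : iIndepFun (fun i (x : ∀ i, Ω i) ↦ X i (x i) - ∫ y, X i y ∂μ i) (Measure.pi μ) :=
    iIndepFun_pi (X := fun i y ↦ X i y - ∫ y, X i y ∂μ i) fun i ↦ ((hX i).sub_const _).aemeasurable
  have hsubG : ∀ i, HasSubgaussianMGF (fun x : ∀ i, Ω i ↦ X i (x i) - ∫ y, X i y ∂μ i)
      ((‖b i - a i‖₊ / 2) ^ 2) (Measure.pi μ) := fun i ↦ by
    have h := hasSubgaussianMGF_of_mem_Icc (μ := Measure.pi μ) (X := fun x ↦ X i (x i))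
      ((hX i).comp (measurable_pi_apply i)).aemeasurable
      (Measure.tendsto_eval_ae_ae.eventually (hab i))
    rwa [integral_comp_eval (hX i).aestronglyMeasurable] at h
  have hsum := HasSubgaussianMGF.sum_of_iIndepFun hindep (s := Finset.univ) fun i _ ↦ hsubG i
  have hproxy : ((∑ i, (‖b i - a i‖₊ / 2) ^ 2 : ℝ≥0) : ℝ) = ∑ i, ((b i - a i) / 2) ^ 2 := by
    push_cast
    simp only [Real.norm_eq_abs, div_pow, sq_abs]
  rw [← ofReal_measureReal]
  refine ENNReal.ofReal_le_ofReal ?_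
  simpa only [hproxy, Finset.sum_sub_distrib, lt_sub_iff_add_lt] using
    measureReal_sqrt_lt_le hsum hδ

end Concentration

section Indistinguishable

variable {Ω : Type*} [MeasurableSpace Ω] {μ ν : Measure Ω} {ε : ℝ}

/-- One-sided `(ε, δ)`-closeness of output distributions: `P S ≤ e^ε * Q S + δ` for every event `S`.
A mechanism is `(ε, δ)`-differentially private iff this holds for its outputs on any two
neighbors. -/
def ApproxDominated (P Q : Measure Ω) (ε δ : ℝ) : Prop :=
  ∀ S, MeasurableSet S → P S ≤ ENNReal.ofReal (exp ε) * Q S + ENNReal.ofReal δ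

/-- Pure `ε`-indistinguishability of two measures: each is at most `e^ε` times the other. -/
structure Indistinguishable (μ ν : Measure Ω) (ε : ℝ) : Prop where
  le : μ ≤ ENNReal.ofReal (exp ε) • ν
  ge : ν ≤ ENNReal.ofReal (exp ε) • μ

namespace Indistinguishable

lemma symm (h : Indistinguishable μ ν ε) : Indistinguishable ν μ ε := ⟨h.ge, h.le⟩

lemma absolutelyContinuous (h : Indistinguishable μ ν ε) : μ ≪ ν :=
  Measure.absolutelyContinuous_of_le_smul h.le

lemma llr_le [SigmaFinite μ] [SigmaFinite ν] (h : Indistinguishable μ ν ε) :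
    ∀ᵐ x ∂μ, llr μ ν x ≤ ε := by
  have hle : μ.rnDeriv ν ≤ᵐ[ν] fun _ ↦ ENNReal.ofReal (exp ε) :=
    ae_le_of_forall_setLIntegral_le_of_sigmaFinite (Measure.measurable_rnDeriv μ ν) fun s _ _ ↦ by
      rw [setLIntegral_const]
      exact (Measure.setLIntegral_rnDeriv_le s).trans (h.le s)
  filter_upwards [h.absolutelyContinuous.ae_le hle, exp_llr_of_ac μ ν h.absolutelyContinuous]
    with x hx hexp
  rw [← exp_le_exp, hexp]
  exact ENNReal.toReal_le_of_le_ofReal (exp_nonneg ε) hx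

lemma llr_mem_Icc [SigmaFinite μ] [SigmaFinite ν] (h : Indistinguishable μ ν ε) :
    ∀ᵐ x ∂μ, llr μ ν x ∈ Icc (-ε) ε := by
  filter_upwards [h.llr_le, h.absolutelyContinuous.ae_le h.symm.llr_le,
    neg_llr h.absolutelyContinuous] with x hle hge hneg
  exact ⟨neg_le.1 (hneg.trans_le hge), hle⟩

end Indistinguishable

lemma abs_exp_sub_one_le_exp_abs_sub_one (x : ℝ) : |exp x - 1| ≤ exp |x| - 1 := by
  rcases le_total 0 x with hx | hx
  · rw [abs_of_nonneg hx, abs_of_nonneg (sub_nonneg.2 (one_le_exp hx))]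
  · rw [abs_of_nonpos hx, abs_of_nonpos (sub_nonpos.2 (exp_le_one_iff.2 hx))]
    linarith [add_one_le_exp x, add_one_le_exp (-x)]

-- For `x` a privacy loss `log (dμ/dν)`, the term `1 - exp (-x) = 1 - dν/dμ` has `μ`-mean zero.
lemma le_mul_exp_sub_one_add_one_sub_exp_neg {x : ℝ} (hx : |x| ≤ ε) :
    x ≤ ε * (exp ε - 1) + (1 - exp (-x)) := by
  have hexp : x * exp (-x) ≤ 1 - exp (-x) := by
    have h := mul_le_mul_of_nonneg_right (add_one_le_exp x) (exp_nonneg (-x))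
    rw [← exp_add, add_neg_cancel, exp_zero] at h
    linarith
  have hprod : x * (1 - exp (-x)) ≤ ε * (exp ε - 1) :=
    calc x * (1 - exp (-x)) ≤ |x| * |exp (-x) - 1| := by
          rw [abs_sub_comm, ← abs_mul]
          exact le_abs_self _
      _ ≤ |x| * (exp |x| - 1) := by
          gcongr
          simpa using abs_exp_sub_one_le_exp_abs_sub_one (-x)
      _ ≤ ε * (exp ε - 1) := by
          have := abs_nonneg x
          have : 0 ≤ exp |x| - 1 := sub_nonneg.2 (one_le_exp this)
          gcongr
          linarith
  linarith

lemma Indistinguishable.integral_llr_le [IsProbabilityMeasure μ] [IsProbabilityMeasure ν]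
    (h : Indistinguishable μ ν ε) : ∫ x, llr μ ν x ∂μ ≤ ε * (exp ε - 1) := by
  have hint : Integrable (llr μ ν) μ :=
    Integrable.of_mem_Icc (-ε) ε (measurable_llr μ ν).aemeasurable h.llr_mem_Icc
  have hexp : (fun x ↦ exp (-llr μ ν x)) =ᵐ[μ] fun x ↦ (ν.rnDeriv μ x).toReal :=
    exp_neg_llr h.absolutelyContinuous
  have hexp_int : Integrable (fun x ↦ exp (-llr μ ν x)) μ :=
    Measure.integrable_toReal_rnDeriv.congr hexp.symm
  have hexp_one : ∫ x, exp (-llr μ ν x) ∂μ = 1 := by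
    rw [integral_congr_ae hexp, Measure.integral_toReal_rnDeriv h.symm.absolutelyContinuous,
      probReal_univ]
  calc ∫ x, llr μ ν x ∂μ
      ≤ ∫ x, (ε * (exp ε - 1) + (1 - exp (-llr μ ν x))) ∂μ := by
        refine integral_mono_ae hint (by fun_prop) ?_
        filter_upwards [h.llr_mem_Icc] with x hx
        exact le_mul_exp_sub_one_add_one_sub_exp_neg (abs_le.2 hx)
    _ = ε * (exp ε - 1) := by
        rw [integral_add (by fun_prop) (by fun_prop), integral_sub (by fun_prop) hexp_int, hexp_one]
        simp

end Indistinguishable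

section CommonPart

variable {Ω : Type*} [MeasurableSpace Ω] {μ ν P Q : Measure Ω} {ε δ : ℝ}

namespace Indistinguishable

lemma refl (hε : 0 ≤ ε) (μ : Measure Ω) : Indistinguishable μ μ ε := by
  have h : μ ≤ ENNReal.ofReal (exp ε) • μ :=
    calc μ = (1 : ℝ≥0∞) • μ := (one_smul _ μ).symm
      _ ≤ ENNReal.ofReal (exp ε) • μ := by
        gcongr
        exact ENNReal.one_le_ofReal.2 (one_le_exp hε)
  exact ⟨h, h⟩

lemma smul (h : Indistinguishable μ ν ε) (c : ℝ≥0∞) : Indistinguishable (c • μ) (c • ν) ε where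
  le := by rw [smul_comm]; gcongr; exact h.le
  ge := by rw [smul_comm]; gcongr; exact h.ge

lemma inf_smul_exp (hε : 0 ≤ ε) (P Q : Measure Ω) :
    Indistinguishable (P ⊓ ENNReal.ofReal (exp ε) • Q) (Q ⊓ ENNReal.ofReal (exp ε) • P) ε := by
  have hle (P Q : Measure Ω) : P ⊓ ENNReal.ofReal (exp ε) • Q ≤
      ENNReal.ofReal (exp ε) • (Q ⊓ ENNReal.ofReal (exp ε) • P) := by
    have h0 : ENNReal.ofReal (exp ε) ≠ 0 := by simp [exp_pos]
    rw [← inv_smul_measure_le_iff h0 ENNReal.ofReal_ne_top]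
    refine le_inf ?_ ?_ <;> rw [inv_smul_measure_le_iff h0 ENNReal.ofReal_ne_top]
    · exact inf_le_right
    · refine inf_le_left.trans ((refl hε P).le.trans ?_)
      gcongr
      exact (refl hε P).le
  exact ⟨hle P Q, hle Q P⟩

lemma exists_le_measure_univ_eq [IsFiniteMeasure μ] (hε : 0 ≤ ε) (h : Indistinguishable μ ν ε)
    (hνμ : ν univ ≤ μ univ) : ∃ τ ≤ μ, Indistinguishable τ ν ε ∧ τ univ = ν univ := by
  have h0 : ENNReal.ofReal (exp ε) ≠ 0 := by simp [exp_pos]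
  have hinv {ρ : Measure Ω} := inv_smul_measure_le_iff (μ := ν) (ν := ρ) h0 ENNReal.ofReal_ne_top
  obtain ⟨τ, hντ, hτμ, hτ⟩ :=
    exists_measure_univ_eq_of_le (hinv.2 h.ge) (hinv.2 (refl hε ν).le univ) hνμ
  exact ⟨τ, hτμ, ⟨hτμ.trans h.le, hinv.1 hντ⟩, hτ⟩

end Indistinguishable

lemma exists_indistinguishable_le [IsProbabilityMeasure P] [IsProbabilityMeasure Q]
    (hε : 0 ≤ ε) (hPQ : ApproxDominated P Q ε δ) (hQP : ApproxDominated Q P ε δ) :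
    ∃ μ ≤ P, ∃ ν ≤ Q, Indistinguishable μ ν ε ∧ μ univ = ν univ ∧
      1 ≤ μ univ + ENNReal.ofReal δ := by
  wlog hmass : (Q ⊓ ENNReal.ofReal (exp ε) • P) univ ≤ (P ⊓ ENNReal.ofReal (exp ε) • Q) univ
    generalizing P Q
  · obtain ⟨ν, hν, μ, hμ, h, heq, h1⟩ := this hQP hPQ (le_of_not_ge hmass)
    exact ⟨μ, hμ, ν, hν, h.symm, heq.symm, heq ▸ h1⟩
  have : IsFiniteMeasure (P ⊓ ENNReal.ofReal (exp ε) • Q) := isFiniteMeasure_of_le P inf_le_left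
  have : IsFiniteMeasure (ENNReal.ofReal (exp ε) • P) := P.smul_finite ENNReal.ofReal_ne_top
  obtain ⟨μ, hμ, hind, hμν⟩ :=
    (Indistinguishable.inf_smul_exp hε P Q).exists_le_measure_univ_eq hε hmass
  refine ⟨μ, hμ.trans inf_le_left, _, inf_le_left, hind, hμν, ?_⟩
  rw [hμν, ← measure_univ (μ := Q)]
  exact measure_univ_le_inf_add hQP

lemma exists_indistinguishable_smul_le [IsProbabilityMeasure P] [IsProbabilityMeasure Q]
    (hε : 0 ≤ ε) (hPQ : ApproxDominated P Q ε δ) (hQP : ApproxDominated Q P ε δ) :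
    ∃ (c : ℝ≥0) (μ ν : Measure Ω), IsProbabilityMeasure μ ∧ IsProbabilityMeasure ν ∧
      Indistinguishable μ ν ε ∧ c • μ ≤ P ∧ c • ν ≤ Q ∧ 1 ≤ c + ENNReal.ofReal δ := by
  obtain ⟨μ, hμ, ν, hν, h, hmass, h1⟩ := exists_indistinguishable_le hε hPQ hQP
  rcases eq_or_ne μ 0 with rfl | hμ0
  · exact ⟨0, P, P, ‹_›, ‹_›, .refl hε P, by simpa using Measure.zero_le P,
      by simpa using Measure.zero_le Q, by simpa using h1⟩
  have : IsFiniteMeasure μ := isFiniteMeasure_of_le P hμ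
  have : IsFiniteMeasure ν := isFiniteMeasure_of_le Q hν
  have : NeZero μ := ⟨hμ0⟩
  have : NeZero ν := ⟨fun h0 ↦ hμ0 (by simpa [h0] using hmass)⟩
  have hcancel (ρ : Measure Ω) [IsFiniteMeasure ρ] [NeZero ρ] :
      (ρ univ).toNNReal • (ρ univ)⁻¹ • ρ = ρ := by
    have hsmul (a : ℝ≥0) (τ : Measure Ω) : a • τ = (a : ℝ≥0∞) • τ := rfl
    rw [hsmul, ENNReal.coe_toNNReal (measure_ne_top ρ univ), smul_smul,
      ENNReal.mul_inv_cancel (NeZero.ne _) (measure_ne_top ρ univ), one_smul]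
  refine ⟨(μ univ).toNNReal, (μ univ)⁻¹ • μ, (ν univ)⁻¹ • ν, inferInstance, inferInstance,
    hmass ▸ h.smul _, (hcancel μ).trans_le hμ, ?_, ?_⟩
  · exact hmass ▸ (hcancel ν).trans_le hν
  · rwa [ENNReal.coe_toNNReal (measure_ne_top μ univ)]

lemma approxDominated_of_smul_le {δ' : ℝ} {c : ℝ≥0} [IsProbabilityMeasure P]
    [IsProbabilityMeasure μ] (hδ : 0 ≤ δ) (hδ' : 0 ≤ δ') (hP : c • μ ≤ P) (hQ : c • ν ≤ Q)
    (hc : 1 ≤ c + ENNReal.ofReal δ) (h : ApproxDominated μ ν ε δ') :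
    ApproxDominated P Q ε (δ + δ') := by
  intro S hS
  have hc_one : (c : ℝ≥0∞) ≤ 1 := by simpa using hP univ
  have hPS : P S ≤ c * μ S + ENNReal.ofReal δ := by
    rw [← ENNReal.add_le_add_iff_right (measure_ne_top P Sᶜ)]
    calc P S + P Sᶜ ≤ c * (μ S + μ Sᶜ) + ENNReal.ofReal δ := by
          rwa [prob_add_prob_compl hS, prob_add_prob_compl hS, mul_one]
      _ = c * μ S + ENNReal.ofReal δ + c * μ Sᶜ := by ring
      _ ≤ c * μ S + ENNReal.ofReal δ + P Sᶜ := by gcongr; exact hP Sᶜ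
  calc P S ≤ c * μ S + ENNReal.ofReal δ := hPS
    _ ≤ c * (ENNReal.ofReal (exp ε) * ν S + ENNReal.ofReal δ') + ENNReal.ofReal δ := by
        gcongr; exact h S hS
    _ = ENNReal.ofReal (exp ε) * (c * ν S) + (ENNReal.ofReal δ + c * ENNReal.ofReal δ') := by ring
    _ ≤ ENNReal.ofReal (exp ε) * Q S + (ENNReal.ofReal δ + 1 * ENNReal.ofReal δ') := by
        gcongr; exact hQ S
    _ = ENNReal.ofReal (exp ε) * Q S + ENNReal.ofReal (δ + δ') := by
        rw [one_mul, ENNReal.ofReal_add hδ hδ']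

end CommonPart

section Composition

variable {ι : Type*} [Fintype ι] {Ω : ι → Type*} [∀ i, MeasurableSpace (Ω i)]
  {ε δ : ι → ℝ} {δ' : ℝ}

lemma Indistinguishable.approxDominated_pi {μ ν : ∀ i, Measure (Ω i)}
    [∀ i, IsProbabilityMeasure (μ i)] [∀ i, IsProbabilityMeasure (ν i)]
    (h : ∀ i, Indistinguishable (μ i) (ν i) (ε i)) (hδ' : 0 < δ') :
    ApproxDominated (Measure.pi μ) (Measure.pi ν)
      (√(2 * (∑ i, ε i ^ 2) * log (1 / δ')) + ∑ i, ε i * (exp (ε i) - 1)) δ' := by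
  intro S hS
  have hac i := (h i).absolutelyContinuous
  refine (measure_le_exp_mul_add_measure_llr (absolutelyContinuous_pi hac)
    (√(2 * (∑ i, ε i ^ 2) * log (1 / δ')) + ∑ i, ε i * (exp (ε i) - 1)) hS).trans ?_
  gcongr
  refine le_trans (measure_mono_ae ?_)
    (measure_pi_sum_gt_le (fun i ↦ measurable_llr (μ i) (ν i)) (fun i ↦ (h i).llr_mem_Icc) hδ')
  filter_upwards [llr_pi hac] with x hx (hlt : _ < llr _ _ x)
  rw [hx] at hlt
  refine lt_of_le_of_lt ?_ hlt
  simp only [sub_neg_eq_add, add_self_div_two]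
  gcongr with i
  exact (h i).integral_llr_le

lemma one_le_prod_add_sum {ι : Type*} (s : Finset ι) {c d : ι → ℝ≥0∞} (hc : ∀ i ∈ s, c i ≤ 1)
    (h : ∀ i ∈ s, 1 ≤ c i + d i) : 1 ≤ ∏ i ∈ s, c i + ∑ i ∈ s, d i := by
  induction s using Finset.cons_induction with
  | empty => simp
  | cons a s ha ih =>
    simp only [Finset.forall_mem_cons] at hc h
    rw [Finset.prod_cons, Finset.sum_cons]
    calc 1 ≤ c a * 1 + d a := by simpa using h.1
      _ ≤ c a * (∏ i ∈ s, c i + ∑ i ∈ s, d i) + d a := by gcongr; exact ih hc.2 h.2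
      _ = c a * ∏ i ∈ s, c i + (d a + c a * ∑ i ∈ s, d i) := by ring
      _ ≤ c a * ∏ i ∈ s, c i + (d a + 1 * ∑ i ∈ s, d i) := by gcongr; exact hc.1
      _ = c a * ∏ i ∈ s, c i + (d a + ∑ i ∈ s, d i) := by rw [one_mul]

theorem ApproxDominated.pi {P Q : ∀ i, Measure (Ω i)}
    [∀ i, IsProbabilityMeasure (P i)] [∀ i, IsProbabilityMeasure (Q i)]
    (hε : ∀ i, 0 ≤ ε i) (hδ : ∀ i, 0 ≤ δ i) (hδ' : 0 < δ')
    (hPQ : ∀ i, ApproxDominated (P i) (Q i) (ε i) (δ i))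
    (hQP : ∀ i, ApproxDominated (Q i) (P i) (ε i) (δ i)) :
    ApproxDominated (Measure.pi P) (Measure.pi Q)
      (√(2 * (∑ i, ε i ^ 2) * log (1 / δ')) + ∑ i, ε i * (exp (ε i) - 1)) (∑ i, δ i + δ') := by
  choose c μ ν hμ hν hind hP hQ hc using fun i ↦
    exists_indistinguishable_smul_le (hε i) (hPQ i) (hQP i)
  have hc_one i : (c i : ℝ≥0∞) ≤ 1 := by simpa using hP i univ
  have hmass : 1 ≤ ((∏ i, c i : ℝ≥0) : ℝ≥0∞) + ENNReal.ofReal (∑ i, δ i) := by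
    rw [ENNReal.ofNNReal_finsetProd, ENNReal.ofReal_sum_of_nonneg fun i _ ↦ hδ i]
    exact one_le_prod_add_sum _ (fun i _ ↦ hc_one i) fun i _ ↦ hc i
  exact approxDominated_of_smul_le (Finset.sum_nonneg fun i _ ↦ hδ i) hδ'.le
    (prod_smul_measure_pi_le hP) (prod_smul_measure_pi_le hQ) hmass
    (Indistinguishable.approxDominated_pi hind hδ')

end Composition

lemma Neighbor.symm {D : Type*} {n : ℕ} {x y : Fin n → D} (h : Neighbor x y) : Neighbor y x := by
  simpa only [Neighbor, ne_comm] using h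

theorem advanced_composition_general {D : Type*} {n : ℕ} {ι : Type*} [Fintype ι]
    {R : ι → Type*} [∀ i, MeasurableSpace (R i)]
    (K : ∀ i, (Fin n → D) → Measure (R i)) [∀ i x, IsProbabilityMeasure (K i x)]
    (ε δ : ι → ℝ) (δ' : ℝ) (hε : ∀ i, 0 ≤ ε i) (hδ : ∀ i, 0 ≤ δ i) (hδ' : 0 < δ')
    (hK : ∀ i, DiffPriv (K i) (ε i) (δ i)) :
    DiffPriv (fun x ↦ Measure.pi fun i ↦ K i x)
      (√(2 * (∑ i, ε i ^ 2) * log (1 / δ')) + ∑ i, ε i * (exp (ε i) - 1)) (∑ i, δ i + δ') :=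
  fun x y hxy ↦ ApproxDominated.pi hε hδ hδ' (fun i ↦ hK i x y hxy) fun i ↦ hK i y x hxy.symm

/-- Advanced composition (Dwork–Rothblum–Vadhan): if an `(ε, δ)`-differentially
private mechanism is run `k` times, then for any `δ' > 0` the composition of all
`k` invocations satisfies `(ε', kδ + δ')`-differential privacy, where
`ε' = ε·√(2k·ln(1/δ')) + k·ε·(e^ε − 1)`. -/
theorem advanced_composition {D : Type*} {n : ℕ} {k : ℕ}
    {R : Fin k → Type*} [∀ i, MeasurableSpace (R i)]
    (K : ∀ i : Fin k, (Fin n → D) → Measure (R i))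
    (ε δ δ' : ℝ) (hε : 0 ≤ ε) (hδ : 0 ≤ δ) (hδ' : 0 < δ')
    (hprob : ∀ i x, IsProbabilityMeasure (K i x))
    (hK : ∀ i, DiffPriv (K i) ε δ) :
    DiffPriv (fun x => Measure.pi (fun i => K i x))
      (ε * Real.sqrt (2 * k * Real.log (1 / δ')) + k * ε * (Real.exp ε - 1))
      (k * δ + δ') := by
  have hsqrt : √(2 * (k * ε ^ 2) * log (1 / δ')) = ε * √(2 * k * log (1 / δ')) := by
    rw [show 2 * (k * ε ^ 2) * log (1 / δ') = ε ^ 2 * (2 * k * log (1 / δ')) by ring,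
      Real.sqrt_mul (sq_nonneg ε), Real.sqrt_sq hε]
  simpa only [Finset.sum_const, Finset.card_univ, Fintype.card_fin, nsmul_eq_mul, hsqrt,
    ← mul_assoc (k : ℝ)] using
    advanced_composition_general K (fun _ ↦ ε) (fun _ ↦ δ) δ' (fun _ ↦ hε) (fun _ ↦ hδ) hδ' hK
end

section
/- WPINQ join stability: define the weighted join of weighted datasets A and B over key k by assigning, to each pair of rows (a, b) with common key k, weight A(a)·B(b)/(‖A_k‖ + ‖B_k‖), where A_k denotes the restriction of A to rows with key k and ‖A_k‖ = Σ_a A_k(a). Then for fixed B, the map A ↦ A ⋈ B is 1-Lipschitz with respect to the L1 distance on weight functions: ‖(A ⋈ B) − (A' ⋈ B)‖ ≤ ‖A − A'‖. -/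
open Classical

/-- The total weight of the rows of weighted dataset `A` having key `k`. -/
noncomputable def keyNorm {α κ : Type*} [Fintype α] (keyA : α → κ) (A : α → ℝ) (k : κ) : ℝ :=
  ∑ a ∈ Finset.univ.filter (fun a => keyA a = k), A a

/-- The WPINQ weighted join: the output row `(a, b)` (matching on keys) gets
weight `A(a)·B(b) / (‖A_k‖ + ‖B_k‖)` where `k` is the common key. -/
noncomputable def wJoin {α β κ : Type*} [Fintype α] [Fintype β]
    (keyA : α → κ) (keyB : β → κ) (A : α → ℝ) (B : β → ℝ) (p : α × β) : ℝ :=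
  if keyA p.1 = keyB p.2 then
    A p.1 * B p.2 / (keyNorm keyA A (keyA p.1) + keyNorm keyB B (keyA p.1))
  else 0

/-!
On the rows with key `k`, with `m = ‖B_k‖`, the total output weight contributed by the row `a` is
the `a`-coordinate of `(m / (‖A_k‖ + m)) • A_k`. Hence it suffices that `x ↦ (m / (‖x‖ + m)) • x`
is 1-Lipschitz, which holds in any real normed space. For `‖y‖ ≤ ‖x‖`, with coefficients `c` at `x`
and `d` at `y`, the difference of the images is `c • (x - y) - (d - c) • y`; its first term has norm
`c * ‖x - y‖`, and its second has norm at most `(1 - c) * (‖x‖ - ‖y‖)`.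
-/

section RadialScaling

variable {E : Type*} [SeminormedAddCommGroup E] [NormedSpace ℝ E]

theorem dist_div_norm_add_smul_le_of_norm_le {m : ℝ} (hm : 0 ≤ m) {x y : E} (hyx : ‖y‖ ≤ ‖x‖) :
    dist ((m / (‖x‖ + m)) • x) ((m / (‖y‖ + m)) • y) ≤ dist x y := by
  rcases hm.eq_or_lt with rfl | hm
  · simp
  set c := m / (‖x‖ + m) with hc
  set d := m / (‖y‖ + m) with hd
  have hc_nonneg : 0 ≤ c := by positivity
  have hcd : c ≤ d := by rw [hc, hd]; gcongr
  have hd_one : d ≤ 1 := (div_le_one (by positivity)).2 (by simp)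
  have hc_one : c ≤ 1 := hcd.trans hd_one
  have hradial : (d - c) * ‖y‖ ≤ (1 - c) * (‖x‖ - ‖y‖) :=
    calc (d - c) * ‖y‖ = d * (‖y‖ / (‖x‖ + m)) * (‖x‖ - ‖y‖) := by rw [hc, hd]; field_simp; ring
      _ ≤ 1 * (‖x‖ / (‖x‖ + m)) * (‖x‖ - ‖y‖) := by
        have := sub_nonneg.2 hyx
        gcongr
      _ = (1 - c) * (‖x‖ - ‖y‖) := by rw [hc]; field_simp; ring
  rw [dist_eq_norm, dist_eq_norm]
  calc ‖c • x - d • y‖ = ‖c • (x - y) - (d - c) • y‖ := by congr 1; module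
    _ ≤ ‖c • (x - y)‖ + ‖(d - c) • y‖ := norm_sub_le _ _
    _ = c * ‖x - y‖ + (d - c) * ‖y‖ := by
      rw [norm_smul_of_nonneg hc_nonneg, norm_smul_of_nonneg (sub_nonneg.2 hcd)]
    _ ≤ c * ‖x - y‖ + (1 - c) * (‖x‖ - ‖y‖) := by gcongr
    _ ≤ c * ‖x - y‖ + (1 - c) * ‖x - y‖ := by
      have := sub_nonneg.2 hc_one
      gcongr
      exact norm_sub_norm_le x y
    _ = ‖x - y‖ := by ring

theorem lipschitzWith_div_norm_add_smul {m : ℝ} (hm : 0 ≤ m) :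
    LipschitzWith 1 fun x : E ↦ (m / (‖x‖ + m)) • x := by
  refine LipschitzWith.mk_one fun x y ↦ ?_
  rcases le_total ‖y‖ ‖x‖ with h | h
  · exact dist_div_norm_add_smul_le_of_norm_le hm h
  · simpa only [dist_comm] using dist_div_norm_add_smul_le_of_norm_le hm h

end RadialScaling

theorem sum_mul_abs_div_sum_add_sub_le {ι : Type*} (s : Finset ι) {f g : ι → ℝ} {m : ℝ}
    (hm : 0 ≤ m) (hf : ∀ i ∈ s, 0 ≤ f i) (hg : ∀ i ∈ s, 0 ≤ g i) :
    ∑ i ∈ s, m * |f i / (∑ j ∈ s, f j + m) - g i / (∑ j ∈ s, g j + m)| ≤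
      ∑ i ∈ s, |f i - g i| := by
  let toL1 (h : ι → ℝ) : PiLp 1 fun _ : s ↦ ℝ := WithLp.toLp 1 fun i ↦ h i
  have norm_toL1 {h : ι → ℝ} (hh : ∀ i ∈ s, 0 ≤ h i) : ‖toL1 h‖ = ∑ i ∈ s, h i := by
    rw [PiLp.norm_eq_of_L1, ← Finset.sum_coe_sort s h]
    exact Finset.sum_congr rfl fun i _ ↦ Real.norm_of_nonneg (hh i i.2)
  have hlip := (lipschitzWith_div_norm_add_smul hm).dist_le_mul (toL1 f) (toL1 g)
  rw [NNReal.coe_one, one_mul, norm_toL1 hf, norm_toL1 hg, PiLp.dist_eq_of_L1,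
    PiLp.dist_eq_of_L1] at hlip
  rw [← Finset.sum_coe_sort s, ← Finset.sum_coe_sort s fun i ↦ |f i - g i|]
  refine (Finset.sum_congr rfl fun i _ ↦ ?_).trans_le hlip
  rw [Real.dist_eq, PiLp.smul_apply, PiLp.smul_apply, smul_eq_mul, smul_eq_mul,
    div_mul_eq_mul_div, div_mul_eq_mul_div, mul_div_assoc, mul_div_assoc, ← mul_sub, abs_mul,
    abs_of_nonneg hm]

theorem sum_le_sum_of_fiberwise_le {ι κ M : Type*} [AddCommMonoid M] [PartialOrder M]
    [IsOrderedAddMonoid M] (s : Finset ι) (key : ι → κ) {f g : ι → M}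
    (h : ∀ k ∈ s.image key, ∑ i ∈ s with key i = k, f i ≤ ∑ i ∈ s with key i = k, g i) :
    ∑ i ∈ s, f i ≤ ∑ i ∈ s, g i := by
  have key_mem (i : ι) (hi : i ∈ s) : key i ∈ s.image key := Finset.mem_image_of_mem key hi
  rw [← Finset.sum_fiberwise_of_maps_to key_mem f, ← Finset.sum_fiberwise_of_maps_to key_mem g]
  exact Finset.sum_le_sum h

section WeightedJoin

variable {α β κ : Type*} [Fintype α] [Fintype β] (keyA : α → κ) (keyB : β → κ)

theorem keyNorm_nonneg {A : α → ℝ} (hA : ∀ a, 0 ≤ A a) (k : κ) : 0 ≤ keyNorm keyA A k :=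
  Finset.sum_nonneg fun a _ ↦ hA a

theorem sum_abs_wJoin_sub_wJoin_eq_keyNorm_mul_abs (A A' : α → ℝ) {B : β → ℝ}
    (hB : ∀ b, 0 ≤ B b) (a : α) :
    ∑ b, |wJoin keyA keyB A B (a, b) - wJoin keyA keyB A' B (a, b)| =
      keyNorm keyB B (keyA a) *
        |A a / (keyNorm keyA A (keyA a) + keyNorm keyB B (keyA a)) -
          A' a / (keyNorm keyA A' (keyA a) + keyNorm keyB B (keyA a))| :=
  calc
    _ = ∑ b with keyB b = keyA a, B b *
          |A a / (keyNorm keyA A (keyA a) + keyNorm keyB B (keyA a)) -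
            A' a / (keyNorm keyA A' (keyA a) + keyNorm keyB B (keyA a))| := by
      rw [Finset.sum_filter]
      refine Finset.sum_congr rfl fun b _ ↦ ?_
      by_cases hkey : keyB b = keyA a
      · simp only [wJoin, hkey, if_true]
        rw [mul_div_right_comm, mul_div_right_comm, ← sub_mul, abs_mul, abs_of_nonneg (hB b),
          mul_comm]
      · simp [wJoin, hkey, Ne.symm hkey]
    _ = _ := (Finset.sum_mul _ _ _).symm

theorem sum_abs_wJoin_sub_wJoin_fiber_le {A A' : α → ℝ} {B : β → ℝ}
    (hA : ∀ a, 0 ≤ A a) (hA' : ∀ a, 0 ≤ A' a) (hB : ∀ b, 0 ≤ B b) (k : κ) :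
    ∑ a with keyA a = k, ∑ b, |wJoin keyA keyB A B (a, b) - wJoin keyA keyB A' B (a, b)| ≤
      ∑ a with keyA a = k, |A a - A' a| :=
  calc
    _ = ∑ a with keyA a = k, keyNorm keyB B k *
          |A a / (keyNorm keyA A k + keyNorm keyB B k) -
            A' a / (keyNorm keyA A' k + keyNorm keyB B k)| := by
      refine Finset.sum_congr rfl fun a ha ↦ ?_
      rw [sum_abs_wJoin_sub_wJoin_eq_keyNorm_mul_abs keyA keyB A A' hB, (Finset.mem_filter.1 ha).2]
    _ ≤ ∑ a with keyA a = k, |A a - A' a| :=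
      sum_mul_abs_div_sum_add_sub_le _ (keyNorm_nonneg keyB hB k)
        (fun a _ ↦ hA a) (fun a _ ↦ hA' a)

end WeightedJoin

/-- WPINQ join stability: for a fixed weighted dataset `B`, the map
`A ↦ A ⋈ B` is 1-Lipschitz with respect to the L1 distance on weight
functions: `‖(A ⋈ B) − (A' ⋈ B)‖ ≤ ‖A − A'‖`. -/
theorem wpinq_join_stability {α β κ : Type*} [Fintype α] [Fintype β]
    (keyA : α → κ) (keyB : β → κ) (A A' : α → ℝ) (B : β → ℝ)
    (hA : ∀ a, 0 ≤ A a) (hA' : ∀ a, 0 ≤ A' a) (hB : ∀ b, 0 ≤ B b) :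
    ∑ p : α × β, |wJoin keyA keyB A B p - wJoin keyA keyB A' B p|
      ≤ ∑ a : α, |A a - A' a| := by
  rw [Fintype.sum_prod_type]
  exact sum_le_sum_of_fiberwise_le Finset.univ keyA fun k _ ↦
    sum_abs_wJoin_sub_wJoin_fiber_le keyA keyB hA hA' hB k
end
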